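/- Let $G \subseteq [0,1]^d$ be a convex set with nonempty interior and let $B, \Gamma_1, \dots, \Gamma_d > 0$. Let $f, g : G \to \mathbb{R}$ be convex functions that are lower semicontinuous on $G$, with $|f| \le B$ and $|g| \le B$ on $G$, and with $|f(x+\lambda e_i) - f(x)| \le \Gamma_i|\lambda|$ and $|g(x+\lambda e_i) - g(x)| \le \Gamma_i|\lambda|$ whenever $x$ and $x+\lambda e_i$ both lie in $G$ ($e_1,\dots,e_d$ the standard basis of $\mathbb{R}^d$). Then $$\sup_{x\in G} |f(x) - g(x)| \le d_H\bigl(V_B(f), V_B(g)\bigr)\, \sqrt{1 + \sum_{i=1}^d \Gamma_i^2},$$ where $V_B(h) := \{(x,t) \in \mathbb{R}^d \times \mathbb{R} : x \in G,\ h(x) \le t \le B\} \subseteq \mathbb{R}^{d+1}$ and $d_H$ denotes the Hausdorff distance between subsets of $\mathbb{R}^{d+1}$ with respect to the Euclidean norm. -/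

import Mathlib

/-- The class `C(D, B, Γ)` of convex functions on `D ⊆ ℝ^d` bounded in absolute value by `B` and
with Lipschitz constant `Γ i` in the `i`-th coordinate direction, as long as both points lie
in `D`. Only the values of the function on `D` matter. -/
def convexLipClass {d : ℕ} (D : Set (EuclideanSpace ℝ (Fin d))) (B : ℝ) (Γ : Fin d → ℝ) :
    Set (EuclideanSpace ℝ (Fin d) → ℝ) :=
  {f | ConvexOn ℝ D f ∧ (∀ x ∈ D, |f x| ≤ B) ∧
    ∀ i : Fin d, ∀ x ∈ D, ∀ l : ℝ, x + l • EuclideanSpace.single i (1 : ℝ) ∈ D →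
      |f (x + l • EuclideanSpace.single i (1 : ℝ)) - f x| ≤ Γ i * |l|}

/-- The first `d` coordinates `(x_1, …, x_d)` of a point of `ℝ^{d+1}`. -/
def initCoords {d : ℕ} (z : EuclideanSpace ℝ (Fin (d + 1))) : EuclideanSpace ℝ (Fin d) :=
  WithLp.toLp 2 fun i => z i.castSucc

/-- The truncated epigraph `V_B(f)` of a function `f` on `G ⊆ ℝ^d`, as a subset of the
Euclidean space `ℝ^{d+1}`. -/
def epigraphB {d : ℕ} (G : Set (EuclideanSpace ℝ (Fin d))) (B : ℝ)
    (f : EuclideanSpace ℝ (Fin d) → ℝ) : Set (EuclideanSpace ℝ (Fin (d + 1))) :=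
  {z | initCoords z ∈ G ∧ f (initCoords z) ≤ z (Fin.last d) ∧ z (Fin.last d) ≤ B}

/-! Moving one coordinate at a time, Cauchy–Schwarz gives `|f y - f z| ≤ L ‖y - z‖` with
`L = √(∑ Γᵢ²)` for `y` close to an interior point `z` of `G`. Hence `z` is a local, and by
convexity a global, minimum of `f + L ‖· - z‖` on `G`; lower semicontinuity extends this to every
`z ∈ G`, so `f` is `L`-Lipschitz. The epigraph of `f` therefore lies in the region above the
downward cone of slope `L` with apex `(x, f x)`, and a point at height `h` below the apex has
distance at least `h / √(1 + L²)` from that region; for `h = f x - g x` this bounds the distance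
from `(x, g x)` to the epigraph of `f`. -/

open Set Filter Topology Metric
open scoped NNReal

section CoordLipschitz

variable {ι : Type*} [DecidableEq ι]

/-- `f` is Lipschitz on `D` in each coordinate direction, with constant `Γ i` in the `i`-th one.
Only points of `D` that differ in a single coordinate are compared, as in `convexLipClass`. -/
def CoordLipschitzOn (Γ : ι → ℝ) (f : EuclideanSpace ℝ ι → ℝ) (D : Set (EuclideanSpace ℝ ι)) :
    Prop :=
  ∀ i, ∀ x ∈ D, ∀ l : ℝ, x + l • EuclideanSpace.single i (1 : ℝ) ∈ D →
    |f (x + l • EuclideanSpace.single i (1 : ℝ)) - f x| ≤ Γ i * |l|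

variable {Γ : ι → ℝ} {f : EuclideanSpace ℝ ι → ℝ} {D : Set (EuclideanSpace ℝ ι)}

theorem CoordLipschitzOn.abs_add_sum_single_sub_le (hf : CoordLipschitzOn Γ f D)
    {z : EuclideanSpace ℝ ι} {h : ι → ℝ}
    (hD : ∀ S : Finset ι, z + ∑ i ∈ S, h i • EuclideanSpace.single i (1 : ℝ) ∈ D) (S : Finset ι) :
    |f (z + ∑ i ∈ S, h i • EuclideanSpace.single i (1 : ℝ)) - f z| ≤ ∑ i ∈ S, Γ i * |h i| := by
  induction S using Finset.induction_on with
  | empty => simp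
  | insert i S hi ih =>
    have hinsert : z + ∑ j ∈ insert i S, h j • EuclideanSpace.single j (1 : ℝ) =
        z + ∑ j ∈ S, h j • EuclideanSpace.single j 1 + h i • EuclideanSpace.single i 1 := by
      rw [Finset.sum_insert hi]
      abel
    rw [hinsert, Finset.sum_insert hi]
    exact (abs_sub_le _ _ _).trans (add_le_add (hf i _ (hD S) _ (hinsert ▸ hD _)) ih)

variable [Fintype ι]

theorem CoordLipschitzOn.eventually_abs_sub_le (hf : CoordLipschitzOn Γ f D)
    {z : EuclideanSpace ℝ ι} (hz : z ∈ interior D) :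
    ∀ᶠ y in 𝓝 z, |f y - f z| ≤ √(∑ i, Γ i ^ 2) * dist y z := by
  have hD : ∀ᶠ y in 𝓝 z, ∀ S : Finset ι,
      z + ∑ i ∈ S, (y i - z i) • EuclideanSpace.single i (1 : ℝ) ∈ D := by
    refine eventually_all.2 fun S => ?_
    have hcont : Continuous fun y : EuclideanSpace ℝ ι =>
        z + ∑ i ∈ S, (y i - z i) • EuclideanSpace.single i (1 : ℝ) := by fun_prop
    exact hcont.tendsto' z z (by simp) (mem_interior_iff_mem_nhds.1 hz)
  filter_upwards [hD] with y hy
  have hyz : z + ∑ i, (y i - z i) • EuclideanSpace.single i (1 : ℝ) = y := by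
    have hsum := (EuclideanSpace.basisFun ι ℝ).sum_repr (y - z)
    simp only [EuclideanSpace.basisFun_repr, EuclideanSpace.basisFun_apply, PiLp.sub_apply] at hsum
    rw [hsum, add_sub_cancel]
  calc |f y - f z| ≤ ∑ i, Γ i * |y i - z i| := by
        simpa only [hyz] using hf.abs_add_sum_single_sub_le hy Finset.univ
    _ ≤ √(∑ i, Γ i ^ 2) * √(∑ i, |y i - z i| ^ 2) := Real.sum_mul_le_sqrt_mul_sqrt _ _ _
    _ = √(∑ i, Γ i ^ 2) * dist y z := by simp only [EuclideanSpace.dist_eq, Real.dist_eq]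

end CoordLipschitz

section ConvexLipschitz

theorem le_of_lowerSemicontinuousOn_of_subset_closure {α β : Type*} [TopologicalSpace α]
    [LinearOrder β] {s t : Set α} {f : α → β} {c : β} (hf : LowerSemicontinuousOn f s)
    (hts : t ⊆ s) (hst : s ⊆ closure t) (hle : ∀ z ∈ t, f z ≤ c) {x : α} (hx : x ∈ s) :
    f x ≤ c := by
  obtain ⟨v, hv, hsv⟩ := lowerSemicontinuousOn_iff_preimage_Iic.1 hf c
  have htv : t ⊆ v := fun z hz => (hsv.subset ⟨hts hz, hle z hz⟩).2
  exact (hsv.superset ⟨hx, closure_minimal htv hv (hst hx)⟩).2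

variable {E : Type*} [NormedAddCommGroup E] [NormedSpace ℝ E] {s : Set E} {f : E → ℝ} {K : ℝ≥0}

theorem le_add_mul_dist_of_convexOn_of_eventually_le (hf : ConvexOn ℝ s f) {z : E} (hz : z ∈ s)
    (hloc : ∀ᶠ y in 𝓝[s] z, f z ≤ f y + K * dist y z) {y : E} (hy : y ∈ s) :
    f z ≤ f y + K * dist y z := by
  have hconv : ConvexOn ℝ s fun y => f y + K * dist y z :=
    hf.add ((convexOn_dist z hf.1).smul K.coe_nonneg)
  have hlocMin : IsLocalMinOn (fun y => f y + K * dist y z) s z := by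
    filter_upwards [hloc] with y hy
    simpa using hy
  simpa using IsMinOn.of_isLocalMinOn_of_convexOn hz hlocMin hconv hy

theorem lipschitzOnWith_of_convexOn_of_eventually_le (hs : (interior s).Nonempty)
    (hf : ConvexOn ℝ s f) (hlsc : LowerSemicontinuousOn f s)
    (hloc : ∀ z ∈ interior s, ∀ᶠ y in 𝓝 z, f z ≤ f y + K * dist y z) :
    LipschitzOnWith K f s := by
  refine LipschitzOnWith.of_le_add_mul K fun x hx y hy => ?_
  have hcont : Continuous fun z => -(K * dist z y) := by fun_prop
  have hclosure : s ⊆ closure (interior s) :=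
    hf.1.closure_interior_eq_closure_of_nonempty_interior hs ▸ subset_closure
  have hint : ∀ z ∈ interior s, f z + -(K * dist z y) ≤ f y := fun z hz => by
    have hglobal := le_add_mul_dist_of_convexOn_of_eventually_le hf (interior_subset hz)
      (nhdsWithin_le_nhds (hloc z hz)) hy
    rw [dist_comm] at hglobal
    linarith
  have hxy := le_of_lowerSemicontinuousOn_of_subset_closure
    (hlsc.add (hcont.lowerSemicontinuous.lowerSemicontinuousOn s)) interior_subset hclosure hint hx
  linarith

end ConvexLipschitz

section Epigraph

variable {d : ℕ} {G : Set (EuclideanSpace ℝ (Fin d))} {B : ℝ} {f g : EuclideanSpace ℝ (Fin d) → ℝ}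

theorem lipschitzOnWith_of_mem_convexLipClass {Γ : Fin d → ℝ} (hG : (interior G).Nonempty)
    (hf : f ∈ convexLipClass G B Γ) (hlsc : LowerSemicontinuousOn f G) :
    LipschitzOnWith (√(∑ i, Γ i ^ 2)).toNNReal f G := by
  refine lipschitzOnWith_of_convexOn_of_eventually_le hG hf.1 hlsc fun z hz => ?_
  have hcoord : CoordLipschitzOn Γ f G := hf.2.2
  filter_upwards [hcoord.eventually_abs_sub_le hz] with y hy
  rw [Real.coe_toNNReal _ (Real.sqrt_nonneg _)]
  linarith [neg_le_of_abs_le hy]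

theorem dist_sq_eq_initCoords_add_last (z w : EuclideanSpace ℝ (Fin (d + 1))) :
    dist z w ^ 2 =
      dist (initCoords z) (initCoords w) ^ 2 + dist (z (Fin.last d)) (w (Fin.last d)) ^ 2 := by
  simp [EuclideanSpace.dist_sq_eq, initCoords, Fin.sum_univ_castSucc]

/-- The point `(x, t)` of `ℝ^{d+1}`, inverse to the projections `initCoords` and `z (Fin.last d)`
with which `epigraphB` is defined. -/
def snocPoint (x : EuclideanSpace ℝ (Fin d)) (t : ℝ) : EuclideanSpace ℝ (Fin (d + 1)) :=
  WithLp.toLp 2 (Fin.snoc (α := fun _ => ℝ) x t)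

@[simp]
theorem initCoords_snocPoint (x : EuclideanSpace ℝ (Fin d)) (t : ℝ) :
    initCoords (snocPoint x t) = x := by
  ext i
  simp [initCoords, snocPoint]

@[simp]
theorem snocPoint_last (x : EuclideanSpace ℝ (Fin d)) (t : ℝ) :
    snocPoint x t (Fin.last d) = t := by
  simp [snocPoint]

@[simp]
theorem snocPoint_mem_epigraphB_iff {x : EuclideanSpace ℝ (Fin d)} {t : ℝ} :
    snocPoint x t ∈ epigraphB G B f ↔ x ∈ G ∧ f x ≤ t ∧ t ≤ B := by
  simp [epigraphB]

theorem dist_snocPoint_initCoords (z : EuclideanSpace ℝ (Fin (d + 1))) (t : ℝ) :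
    dist z (snocPoint (initCoords z) t) = dist (z (Fin.last d)) t := by
  rw [← sq_eq_sq₀ dist_nonneg dist_nonneg, dist_sq_eq_initCoords_add_last]
  simp

theorem exists_mem_epigraphB_dist_le {C : ℝ} (hC : 0 ≤ C) (hgB : ∀ x ∈ G, g x ≤ B)
    (hgf : ∀ x ∈ G, g x ≤ f x + C) {z : EuclideanSpace ℝ (Fin (d + 1))}
    (hz : z ∈ epigraphB G B f) : ∃ w ∈ epigraphB G B g, dist z w ≤ C := by
  obtain ⟨hzG, hfz, hzB⟩ := hz
  refine ⟨snocPoint (initCoords z) (max (z (Fin.last d)) (g (initCoords z))),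
    snocPoint_mem_epigraphB_iff.2 ⟨hzG, le_max_right _ _, max_le hzB (hgB _ hzG)⟩, ?_⟩
  rw [dist_snocPoint_initCoords, dist_comm, Real.dist_eq,
    abs_of_nonneg (sub_nonneg.2 (le_max_left _ _)), sub_le_iff_le_add]
  exact max_le (by linarith) (by linarith [hgf _ hzG])

/-- If this failed, `hausdorffDist` would take its junk value `0`. -/
theorem hausdorffEDist_epigraphB_ne_top (hf : ∀ x ∈ G, |f x| ≤ B) (hg : ∀ x ∈ G, |g x| ≤ B) :
    hausdorffEDist (epigraphB G B f) (epigraphB G B g) ≠ ⊤ := by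
  have hnear {u v : EuclideanSpace ℝ (Fin d) → ℝ} (hu : ∀ x ∈ G, |u x| ≤ B)
      (hv : ∀ x ∈ G, |v x| ≤ B) :
      ∀ z ∈ epigraphB G B u, ∃ w ∈ epigraphB G B v, edist z w ≤ ENNReal.ofReal (2 * B) := by
    intro z hz
    have hB : 0 ≤ B := (abs_nonneg _).trans (hu _ hz.1)
    obtain ⟨w, hw, hzw⟩ := exists_mem_epigraphB_dist_le (C := 2 * B) (by positivity)
      (fun x hx => le_of_abs_le (hv x hx))
      (fun x hx => by linarith [neg_le_of_abs_le (hu x hx), le_of_abs_le (hv x hx)]) hz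
    exact ⟨w, hw, edist_dist z w ▸ ENNReal.ofReal_le_ofReal hzw⟩
  exact ne_top_of_le_ne_top ENNReal.ofReal_ne_top
    (hausdorffEDist_le_of_mem_edist (hnear hf hg) (hnear hg hf))

theorem sub_last_le_dist_mul_sqrt {K : ℝ≥0} (hf : LipschitzOnWith K f G)
    {z w : EuclideanSpace ℝ (Fin (d + 1))} (hz : initCoords z ∈ G) (hw : w ∈ epigraphB G B f) :
    f (initCoords z) - z (Fin.last d) ≤ dist z w * √(1 + K ^ 2) := by
  set a := dist (initCoords z) (initCoords w)
  set b := dist (z (Fin.last d)) (w (Fin.last d)) with hb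
  have hheight : w (Fin.last d) - z (Fin.last d) ≤ b := by
    rw [hb, dist_comm]
    exact le_abs_self _
  calc f (initCoords z) - z (Fin.last d) ≤ K * a + b := by
        linarith [hf.le_add_mul hz hw.1, hw.2.1]
    _ ≤ √((a ^ 2 + b ^ 2) * (1 + K ^ 2)) := by
        refine Real.le_sqrt_of_sq_le ?_
        linarith [sq_nonneg (a - K * b)]
    _ = dist z w * √(1 + K ^ 2) := by
        rw [← dist_sq_eq_initCoords_add_last, Real.sqrt_mul (sq_nonneg _), Real.sqrt_sq dist_nonneg]

theorem sub_le_hausdorffDist_epigraphB_mul_sqrt {K : ℝ≥0} (hf : LipschitzOnWith K f G)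
    (hfB : ∀ x ∈ G, |f x| ≤ B) (hgB : ∀ x ∈ G, |g x| ≤ B) {x : EuclideanSpace ℝ (Fin d)}
    (hx : x ∈ G) :
    f x - g x ≤ hausdorffDist (epigraphB G B f) (epigraphB G B g) * √(1 + K ^ 2) := by
  have hsqrt : 0 < √(1 + (K : ℝ) ^ 2) := by positivity
  have hfx : snocPoint x (f x) ∈ epigraphB G B f := by
    simpa [hx] using le_of_abs_le (hfB x hx)
  have hgx : snocPoint x (g x) ∈ epigraphB G B g := by
    simpa [hx] using le_of_abs_le (hgB x hx)
  rw [← div_le_iff₀ hsqrt, hausdorffDist_comm]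
  calc (f x - g x) / √(1 + K ^ 2) ≤ infDist (snocPoint x (g x)) (epigraphB G B f) := by
        refine (le_infDist ⟨_, hfx⟩).2 fun w hw => (div_le_iff₀ hsqrt).2 ?_
        simpa using sub_last_le_dist_mul_sqrt hf (z := snocPoint x (g x)) (by simpa using hx) hw
    _ ≤ hausdorffDist (epigraphB G B g) (epigraphB G B f) :=
        infDist_le_hausdorffDist_of_mem hgx (hausdorffEDist_epigraphB_ne_top hgB hfB)

theorem abs_sub_le_hausdorffDist_epigraphB_mul_sqrt {K : ℝ≥0} (hf : LipschitzOnWith K f G)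
    (hg : LipschitzOnWith K g G) (hfB : ∀ x ∈ G, |f x| ≤ B) (hgB : ∀ x ∈ G, |g x| ≤ B)
    {x : EuclideanSpace ℝ (Fin d)} (hx : x ∈ G) :
    |f x - g x| ≤ hausdorffDist (epigraphB G B f) (epigraphB G B g) * √(1 + K ^ 2) := by
  refine abs_sub_le_iff.2 ⟨sub_le_hausdorffDist_epigraphB_mul_sqrt hf hfB hgB hx, ?_⟩
  rw [hausdorffDist_comm]
  exact sub_le_hausdorffDist_epigraphB_mul_sqrt hg hgB hfB hx

theorem sup_dist_le_hausdorffDist_epigraphs_general {Γ : Fin d → ℝ} (hGint : (interior G).Nonempty)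
    (hf : f ∈ convexLipClass G B Γ) (hg : g ∈ convexLipClass G B Γ)
    (hflsc : LowerSemicontinuousOn f G) (hglsc : LowerSemicontinuousOn g G) :
    BddAbove (Set.range fun x : G => |f x - g x|) ∧
      (⨆ x : G, |f x - g x|) ≤
        Metric.hausdorffDist (epigraphB G B f) (epigraphB G B g) *
          Real.sqrt (1 + ∑ i, Γ i ^ 2) := by
  have hΓ : 0 ≤ ∑ i, Γ i ^ 2 := Finset.sum_nonneg fun i _ => sq_nonneg _
  have hpt (x : G) : |f x - g x| ≤
      hausdorffDist (epigraphB G B f) (epigraphB G B g) * √(1 + ∑ i, Γ i ^ 2) := by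
    simpa [Real.sq_sqrt hΓ, hΓ] using abs_sub_le_hausdorffDist_epigraphB_mul_sqrt
      (lipschitzOnWith_of_mem_convexLipClass hGint hf hflsc)
      (lipschitzOnWith_of_mem_convexLipClass hGint hg hglsc) hf.2.1 hg.2.1 x.2
  have : Nonempty G := (hGint.mono interior_subset).to_subtype
  exact ⟨⟨_, forall_mem_range.2 hpt⟩, ciSup_le hpt⟩

end Epigraph

/-- For convex, lower semicontinuous functions `f, g` on a convex `G ⊆ [0,1]^d` with nonempty
interior, bounded by `B` and `Γ i`-Lipschitz in each coordinate direction,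
`sup_G |f - g| ≤ d_H(V_B(f), V_B(g)) √(1 + ∑ Γᵢ²)`. -/
theorem sup_dist_le_hausdorffDist_epigraphs (d : ℕ)
    (G : Set (EuclideanSpace ℝ (Fin d))) (hG : Convex ℝ G)
    (hGsub : G ⊆ {x : EuclideanSpace ℝ (Fin d) | ∀ i, 0 ≤ x i ∧ x i ≤ 1})
    (hGint : (interior G).Nonempty)
    (B : ℝ) (hB : 0 < B) (Γ : Fin d → ℝ) (hΓ : ∀ i, 0 < Γ i)
    (f g : EuclideanSpace ℝ (Fin d) → ℝ)
    (hf : f ∈ convexLipClass G B Γ) (hg : g ∈ convexLipClass G B Γ)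
    (hflsc : LowerSemicontinuousOn f G) (hglsc : LowerSemicontinuousOn g G) :
    BddAbove (Set.range fun x : G => |f x - g x|) ∧
      (⨆ x : G, |f x - g x|) ≤
        Metric.hausdorffDist (epigraphB G B f) (epigraphB G B g) *
          Real.sqrt (1 + ∑ i, Γ i ^ 2) :=
  sup_dist_le_hausdorffDist_epigraphs_general hGint hf hg hflsc hglsc
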